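/- For every n ≥ 3, the following identity of polynomials in t holds: D_n^1(t) = [2(n-1)t - 1]·D_{n-1}^1(t) + 2t(1-t)·(D_{n-1}^1)'(t) + D_{n-1}^{0,1}(t) + t·D_{n-1}^{≥2}(t) + D_{n-1}^{0,≥2}(t), where ′ denotes the formal derivative of polynomials. -/

import Mathlib

/-- A signed permutation of `{1,…,n}`, encoded as an (unsigned) permutation of
`Fin n` together with a choice of sign for each position.  The associated
word is `π_1 π_2 ⋯ π_n` where `π_j = ± σ(j)`. -/
abbrev SignedPerm (n : ℕ) := Equiv.Perm (Fin n) × (Fin n → Bool)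

namespace SignedPerm

/-- The letter `π_j` of the word of `p`, for `1 ≤ j ≤ n` (and `0` otherwise). -/
def word {n : ℕ} (p : SignedPerm n) (j : ℕ) : ℤ :=
  if h : 1 ≤ j ∧ j ≤ n then
    (if p.2 ⟨j - 1, by omega⟩ then -1 else 1) * ((p.1 ⟨j - 1, by omega⟩ : ℕ) + 1)
  else 0

/-- The letter `π_j`, with the type `D` convention `π_0 = -π_2`. -/
def entry {n : ℕ} (p : SignedPerm n) (j : ℕ) : ℤ :=
  if j = 0 then -(p.word 2) else p.word j

/-- The set of `D`-descents of `p`: those `i ∈ {0,…,n-1}` with `π_i > π_{i+1}`. -/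
def ddes {n : ℕ} (p : SignedPerm n) : Finset ℕ :=
  (Finset.range n).filter fun i => p.entry (i + 1) < p.entry i

/-- The number of `D`-descents of `p`. -/
def d {n : ℕ} (p : SignedPerm n) : ℕ := p.ddes.card

/-- Membership in the type `D` Coxeter group `D_n ⊆ B_n`:
the number of negative letters is even. -/
def inD {n : ℕ} (p : SignedPerm n) : Prop :=
  Even (Finset.univ.filter (fun i => p.2 i = true)).card

/-- Type '1': descent at position `1` but not at `0`. -/
def type1 {n : ℕ} (p : SignedPerm n) : Prop := 1 ∈ p.ddes ∧ 0 ∉ p.ddes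

/-- Type '0,1': descents at both positions `0` and `1`. -/
def type01 {n : ℕ} (p : SignedPerm n) : Prop := 0 ∈ p.ddes ∧ 1 ∈ p.ddes

/-- Type '≥2': no descent at positions `0` and `1`. -/
def typeGe2 {n : ℕ} (p : SignedPerm n) : Prop := 0 ∉ p.ddes ∧ 1 ∉ p.ddes

/-- Type '0,≥2': descent at position `0` but not at `1`. -/
def type0Ge2 {n : ℕ} (p : SignedPerm n) : Prop := 0 ∈ p.ddes ∧ 1 ∉ p.ddes

instance {n : ℕ} (p : SignedPerm n) : Decidable p.inD := by
  unfold SignedPerm.inD; infer_instance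
instance {n : ℕ} (p : SignedPerm n) : Decidable p.type1 := by
  unfold SignedPerm.type1; infer_instance
instance {n : ℕ} (p : SignedPerm n) : Decidable p.type01 := by
  unfold SignedPerm.type01; infer_instance
instance {n : ℕ} (p : SignedPerm n) : Decidable p.typeGe2 := by
  unfold SignedPerm.typeGe2; infer_instance
instance {n : ℕ} (p : SignedPerm n) : Decidable p.type0Ge2 := by
  unfold SignedPerm.type0Ge2; infer_instance

end SignedPerm

/-- The type `D` Eulerian number `D_{n,k}`: the number of elements of `D_n`
with exactly `k` `D`-descents (zero for `k < 0`). -/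
def eulerD (n : ℕ) (k : ℤ) : ℕ :=
  (Finset.univ.filter fun p : SignedPerm n => p.inD ∧ (p.d : ℤ) = k).card

/-- The sub-Eulerian number `D_{n,k}^1`. -/
def subEuler1 (n : ℕ) (k : ℤ) : ℕ :=
  (Finset.univ.filter fun p : SignedPerm n => p.inD ∧ p.type1 ∧ (p.d : ℤ) = k).card

/-- The sub-Eulerian number `D_{n,k}^{0,1}`. -/
def subEuler01 (n : ℕ) (k : ℤ) : ℕ :=
  (Finset.univ.filter fun p : SignedPerm n => p.inD ∧ p.type01 ∧ (p.d : ℤ) = k).card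

/-- The sub-Eulerian number `D_{n,k}^{≥2}`. -/
def subEulerGe2 (n : ℕ) (k : ℤ) : ℕ :=
  (Finset.univ.filter fun p : SignedPerm n => p.inD ∧ p.typeGe2 ∧ (p.d : ℤ) = k).card

/-- The sub-Eulerian number `D_{n,k}^{0,≥2}`. -/
def subEuler0Ge2 (n : ℕ) (k : ℤ) : ℕ :=
  (Finset.univ.filter fun p : SignedPerm n => p.inD ∧ p.type0Ge2 ∧ (p.d : ℤ) = k).card

/-- The type `D` Eulerian polynomial `D_n(t) = Σ_{π ∈ D_n} t^{d(π)}`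
(with `D_0(t) = D_1(t) = 1`). -/
noncomputable def polyD (n : ℕ) : Polynomial ℚ :=
  ∑ p ∈ Finset.univ.filter (fun p : SignedPerm n => p.inD), Polynomial.X ^ p.d

/-- The sub-Eulerian polynomial `D_n^1(t)`. -/
noncomputable def polyD1 (n : ℕ) : Polynomial ℚ :=
  ∑ p ∈ Finset.univ.filter (fun p : SignedPerm n => p.inD ∧ p.type1), Polynomial.X ^ p.d

/-- The sub-Eulerian polynomial `D_n^{0,1}(t)`. -/
noncomputable def polyD01 (n : ℕ) : Polynomial ℚ :=
  ∑ p ∈ Finset.univ.filter (fun p : SignedPerm n => p.inD ∧ p.type01), Polynomial.X ^ p.d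

/-- The sub-Eulerian polynomial `D_n^{≥2}(t)`. -/
noncomputable def polyDGe2 (n : ℕ) : Polynomial ℚ :=
  ∑ p ∈ Finset.univ.filter (fun p : SignedPerm n => p.inD ∧ p.typeGe2), Polynomial.X ^ p.d

/-- The sub-Eulerian polynomial `D_n^{0,≥2}(t)`. -/
noncomputable def polyD0Ge2 (n : ℕ) : Polynomial ℚ :=
  ∑ p ∈ Finset.univ.filter (fun p : SignedPerm n => p.inD ∧ p.type0Ge2), Polynomial.X ^ p.d

/-! Negating the letter `±1` preserves all comparisons between letters and exchanges `D_n` with its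
complement in the group of signed permutations, so twice each sub-Eulerian polynomial is a sum over
all signed permutations. These arise uniquely by inserting `±(m + 1)` into a signed permutation `p`
of `{1,…,m}`. Inserting at the front gives type `1` exactly for the sign `+`, inserting after the
first letter never does, and inserting further right keeps the type. Except after the first letter
and at the end, an insertion into a gap adds a `D`-descent unless the gap was one already; counting
gaps by `d(p)` produces the derivative, and the front insertion produces the remaining terms. -/

lemma sum_range_succ_add_of_gap {M : Type*} [AddCommMonoid M] {f g : ℕ → M} {k m : ℕ} (hk : k < m)
    (hlt : ∀ i < k, g i = f i) (hgt : ∀ i, k < i → g (i + 1) = f i) :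
    ∑ i ∈ Finset.range (m + 1), g i + f k = ∑ i ∈ Finset.range m, f i + (g k + g (k + 1)) := by
  obtain ⟨s, rfl⟩ := Nat.exists_eq_add_of_lt hk
  have hlow : ∑ i ∈ Finset.range k, g i = ∑ i ∈ Finset.range k, f i :=
    Finset.sum_congr rfl fun i hi => hlt i (Finset.mem_range.mp hi)
  have hhigh : ∑ i ∈ Finset.range s, g (k + 1 + 1 + i) = ∑ i ∈ Finset.range s, f (k + 1 + i) :=
    Finset.sum_congr rfl fun i _ => by rw [add_right_comm, hgt _ (by omega)]
  rw [show k + s + 1 + 1 = k + 1 + 1 + s by ring, show k + s + 1 = k + 1 + s by ring,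
    Finset.sum_range_add g, Finset.sum_range_add f, hhigh, Finset.sum_range_succ,
    Finset.sum_range_succ, Finset.sum_range_succ, hlow]
  abel

namespace SignedPerm

variable {n m : ℕ}

lemma word_succ (p : SignedPerm n) (i : Fin n) :
    p.word (i + 1) = (if p.2 i then -1 else 1) * (((p.1 i : ℕ) : ℤ) + 1) := by
  simp [word]

lemma word_of_gt (p : SignedPerm n) {j : ℕ} (hj : n < j) : p.word j = 0 :=
  dif_neg (by omega)

lemma entry_zero (p : SignedPerm n) : p.entry 0 = -p.word 2 := rfl

lemma entry_succ (p : SignedPerm n) (j : ℕ) : p.entry (j + 1) = p.word (j + 1) := rfl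

lemma abs_word_succ (p : SignedPerm n) (i : Fin n) :
    |p.word (i + 1)| = ((p.1 i : ℕ) : ℤ) + 1 := by
  have hpos : (0 : ℤ) ≤ ((p.1 i : ℕ) : ℤ) + 1 := by positivity
  rw [word_succ, abs_mul, abs_of_nonneg hpos]
  split_ifs <;> simp

lemma abs_word_succ_inj (p : SignedPerm n) {i j : Fin n} :
    |p.word (i + 1)| = |p.word (j + 1)| ↔ i = j := by
  simp [abs_word_succ, Fin.val_inj]

lemma abs_word_le (p : SignedPerm n) (j : ℕ) : |p.word j| ≤ n := by
  by_cases h : 1 ≤ j ∧ j ≤ n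
  · obtain ⟨i, rfl⟩ : ∃ i : Fin n, (i : ℕ) + 1 = j := ⟨⟨j - 1, by omega⟩, by grind⟩
    rw [abs_word_succ]
    omega
  · simp [word, h]

lemma abs_entry_le (p : SignedPerm n) (j : ℕ) : |p.entry j| ≤ n := by
  cases j with
  | zero => simpa [entry_zero] using p.abs_word_le 2
  | succ j => exact p.abs_word_le (j + 1)

lemma exists_abs_entry_eq (p : SignedPerm n) (hn : 2 ≤ n) {i : ℕ} (hi : i ≤ n) :
    ∃ j : Fin n, (j : ℕ) = (if i = 0 then 1 else i - 1) ∧ |p.entry i| = |p.word (j + 1)| := by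
  cases i with
  | zero => exact ⟨⟨1, hn⟩, rfl, by simp [entry_zero]⟩
  | succ i => exact ⟨⟨i, hi⟩, rfl, rfl⟩

lemma entry_ne_zero (p : SignedPerm n) (hn : 2 ≤ n) {i : ℕ} (hi : i ≤ n) : p.entry i ≠ 0 := by
  obtain ⟨j, -, hj⟩ := p.exists_abs_entry_eq hn hi
  rw [← abs_pos, hj, abs_word_succ]
  positivity

lemma abs_entry_succ_ne (p : SignedPerm n) (hn : 2 ≤ n) {i : ℕ} (hi : i < n) :
    |p.entry (i + 1)| ≠ |p.entry i| := by
  obtain ⟨j, hj, habs⟩ := p.exists_abs_entry_eq hn hi.le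
  rw [habs, entry_succ, Ne, abs_word_succ_inj (i := ⟨i, hi⟩), Fin.ext_iff, hj]
  grind

lemma mem_ddes (p : SignedPerm n) {i : ℕ} : i ∈ p.ddes ↔ i < n ∧ p.entry (i + 1) < p.entry i := by
  simp [ddes]

lemma d_eq_sum (p : SignedPerm n) :
    p.d = ∑ i ∈ Finset.range n, if i ∈ p.ddes then 1 else 0 := by
  have hsub : p.ddes ⊆ Finset.range n := Finset.filter_subset _ _
  rw [← Finset.sum_filter, Finset.filter_mem_eq_inter, Finset.inter_eq_right.mpr hsub,
    ← Finset.card_eq_sum_ones, d]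

section FlipOne

variable [NeZero n]

/-- The signed permutation obtained by negating the letter of absolute value `1`, which is encoded
by the value `0 : Fin n`. This pairs the elements of `D_n` with the other signed permutations. -/
def flipOne (p : SignedPerm n) : SignedPerm n :=
  (p.1, Function.update p.2 (p.1.symm 0) (!p.2 (p.1.symm 0)))

lemma flipOne_flipOne (p : SignedPerm n) : p.flipOne.flipOne = p := by
  simp [flipOne]

lemma word_flipOne (p : SignedPerm n) (j : ℕ) :
    p.flipOne.word j = if |p.word j| = 1 then -p.word j else p.word j := by
  by_cases h : 1 ≤ j ∧ j ≤ n
  · obtain ⟨i, rfl⟩ : ∃ i : Fin n, (i : ℕ) + 1 = j := ⟨⟨j - 1, by omega⟩, by grind⟩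
    rw [abs_word_succ, word_succ, word_succ]
    by_cases hi : i = p.1.symm 0
    · subst hi
      cases hb : p.2 (p.1.symm 0) <;> simp [flipOne, hb]
    · have hpi : p.1 i ≠ 0 := fun h0 => hi ((Equiv.eq_symm_apply _).mpr h0)
      simp [flipOne, hi, hpi]
  · simp [word, h]

lemma entry_flipOne (p : SignedPerm n) (j : ℕ) :
    p.flipOne.entry j = if |p.entry j| = 1 then -p.entry j else p.entry j := by
  cases j with
  | zero =>
    rw [entry_zero, entry_zero, word_flipOne, abs_neg]
    split_ifs <;> rfl
  | succ j => exact p.word_flipOne (j + 1)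

lemma ddes_flipOne (hn : 2 ≤ n) (p : SignedPerm n) : p.flipOne.ddes = p.ddes := by
  ext i
  rw [mem_ddes, mem_ddes, entry_flipOne, entry_flipOne]
  refine and_congr_right fun hi => ?_
  have hne := p.abs_entry_succ_ne hn hi
  have h0 := p.entry_ne_zero hn hi.le
  have h1 := p.entry_ne_zero hn (i := i + 1) hi
  grind

lemma inD_flipOne (p : SignedPerm n) : p.flipOne.inD ↔ ¬p.inD := by
  set i₀ := p.1.symm 0
  have hcard (s : Fin n → Bool) : (Finset.univ.filter fun i => s i = true).card =
      (s i₀).toNat + ∑ i ∈ Finset.univ.erase i₀, (s i).toNat := by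
    rw [Finset.add_sum_erase _ (fun i => (s i).toNat) (Finset.mem_univ i₀), Finset.card_filter]
    exact Finset.sum_congr rfl fun i _ => by cases s i <;> rfl
  have hother : ∑ i ∈ Finset.univ.erase i₀, (p.flipOne.2 i).toNat =
      ∑ i ∈ Finset.univ.erase i₀, (p.2 i).toNat :=
    Finset.sum_congr rfl fun i hi => by simp [flipOne, i₀, Finset.ne_of_mem_erase hi]
  have hflip : p.flipOne.2 i₀ = !p.2 i₀ := by simp [flipOne, i₀]
  rw [inD, inD, hcard, hcard, hother, hflip]
  cases p.2 i₀ <;> simp [Nat.even_add]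

lemma two_nsmul_sum_inD {M : Type*} [AddCommMonoid M] (f : SignedPerm n → M)
    (hf : ∀ p, f p.flipOne = f p) : 2 • ∑ p with p.inD, f p = ∑ p, f p := by
  have hswap : ∑ p with p.inD, f p = ∑ p : SignedPerm n with ¬p.inD, f p :=
    Finset.sum_nbij' flipOne flipOne (by simp [inD_flipOne]) (by simp [inD_flipOne])
      (fun p _ => p.flipOne_flipOne) (fun p _ => p.flipOne_flipOne) (fun p _ => (hf p).symm)
  rw [two_nsmul, ← Finset.sum_filter_add_sum_filter_not Finset.univ inD, ← hswap]

end FlipOne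

section Weight

variable {R : Type*}

/-- The contribution `x ^ d(p)` of `p` to the descent generating function, evaluated at `x`, of the
signed permutations satisfying `P`. -/
def weight [MonoidWithZero R] (x : R) (P : SignedPerm n → Prop) [DecidablePred P]
    (p : SignedPerm n) : R :=
  if P p then x ^ p.d else 0

lemma two_mul_sum_inD_and [Semiring R] (hn : 2 ≤ n) (x : R) (P : SignedPerm n → Prop)
    [DecidablePred P] (hP : ∀ p q, p.ddes = q.ddes → (P p ↔ P q)) :
    2 * ∑ p with p.inD ∧ P p, x ^ p.d = ∑ p, weight x P p := by
  have : NeZero n := ⟨by omega⟩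
  have hflip (p : SignedPerm n) : weight x P p.flipOne = weight x P p := by
    have hd := ddes_flipOne hn p
    simp only [weight, hP _ _ hd, d, hd]
  rw [← two_nsmul_sum_inD _ hflip, nsmul_eq_mul, Nat.cast_two, ← Finset.filter_filter,
    Finset.sum_filter]
  rfl

end Weight

section InsertMax

/-- The word of `p` with the letter `m + 1`, negated if `b` is true, inserted after its first `k`
letters. -/
def insertMax (p : SignedPerm m) (k : Fin (m + 1)) (b : Bool) : SignedPerm (m + 1) :=
  (((finSuccEquiv' k).trans (Equiv.optionCongr p.1)).trans (finSuccEquiv' (Fin.last m)).symm,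
    k.insertNth b p.2)

lemma insertMax_fst_self (p : SignedPerm m) (k : Fin (m + 1)) (b : Bool) :
    (p.insertMax k b).1 k = Fin.last m := by
  simp [insertMax]

lemma insertMax_fst_succAbove (p : SignedPerm m) (k : Fin (m + 1)) (b : Bool) (i : Fin m) :
    (p.insertMax k b).1 (k.succAbove i) = (p.1 i).castSucc := by
  simp [insertMax]

lemma eq_of_insertMax_eq {p q : SignedPerm m} {k l : Fin (m + 1)} {b c : Bool}
    (h : p.insertMax k b = q.insertMax l c) : p = q ∧ k = l ∧ b = c := by
  obtain rfl : k = l := by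
    apply (p.insertMax k b).1.injective
    rw [insertMax_fst_self, h, insertMax_fst_self]
  obtain ⟨rfl, hsigns⟩ : b = c ∧ p.2 = q.2 :=
    Fin.insertNth_inj (α := fun _ => Bool).mp (congrArg Prod.snd h)
  have hperm : p.1 = q.1 := by
    refine Equiv.ext fun i => ?_
    have hi := congrArg (fun r : SignedPerm (m + 1) => r.1 (k.succAbove i)) h
    simpa [insertMax_fst_succAbove] using hi
  exact ⟨Prod.ext hperm hsigns, rfl, rfl⟩

lemma insertMax_bijective : Function.Bijective
    fun x : SignedPerm m × Fin (m + 1) × Bool => x.1.insertMax x.2.1 x.2.2 := by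
  rw [Fintype.bijective_iff_injective_and_card]
  refine ⟨fun x y h => ?_, ?_⟩
  · obtain ⟨hp, hk, hb⟩ := eq_of_insertMax_eq h
    exact Prod.ext hp (Prod.ext hk hb)
  · simp only [Fintype.card_prod, Fintype.card_perm, Fintype.card_pi, Fintype.card_fin,
      Fintype.card_bool, Finset.prod_const, Finset.card_univ, Nat.factorial_succ, pow_succ]
    ring

lemma sum_insertMax {M : Type*} [AddCommMonoid M] (f : SignedPerm (m + 1) → M) :
    ∑ p : SignedPerm m, ∑ k, ∑ b, f (p.insertMax k b) = ∑ q, f q := by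
  rw [← insertMax_bijective.sum_comp, Fintype.sum_prod_type]
  simp only [Fintype.sum_prod_type]

variable (p : SignedPerm m) (k : Fin (m + 1)) (b : Bool)

lemma entry_insertMax_self :
    (p.insertMax k b).entry (k + 1) = (if b then -1 else 1) * ((m : ℤ) + 1) := by
  rw [entry_succ, word_succ, insertMax_fst_self]
  simp [insertMax]

lemma word_insertMax_succAbove (i : Fin m) :
    (p.insertMax k b).word (k.succAbove i + 1) = p.word (i + 1) := by
  rw [word_succ, word_succ, insertMax_fst_succAbove]
  simp [insertMax]

lemma word_insertMax_of_le {j : ℕ} (hj : j ≤ k) : (p.insertMax k b).word j = p.word j := by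
  cases j with
  | zero => simp [word]
  | succ i =>
    have hi : i < m := by omega
    have hpos : k.succAbove ⟨i, hi⟩ = Fin.castSucc ⟨i, hi⟩ :=
      Fin.succAbove_of_castSucc_lt _ _ (Fin.lt_def.mpr hj)
    simpa [hpos] using p.word_insertMax_succAbove k b ⟨i, hi⟩

lemma entry_insertMax_succ {j : ℕ} (hj : k < j) :
    (p.insertMax k b).entry (j + 1) = p.entry j := by
  obtain ⟨i, rfl⟩ := Nat.exists_eq_add_one_of_ne_zero (by omega : j ≠ 0)
  rw [entry_succ, entry_succ]
  by_cases hi : i < m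
  · have hpos : k.succAbove ⟨i, hi⟩ = Fin.succ ⟨i, hi⟩ :=
      Fin.succAbove_of_le_castSucc _ _ (Fin.le_def.mpr (Nat.lt_succ_iff.mp hj))
    simpa [hpos] using p.word_insertMax_succAbove k b ⟨i, hi⟩
  · rw [word_of_gt _ (by omega), word_of_gt _ (by omega)]

lemma entry_insertMax_of_le (hk : 2 ≤ (k : ℕ)) {j : ℕ} (hj : j ≤ k) :
    (p.insertMax k b).entry j = p.entry j := by
  cases j with
  | zero => rw [entry_zero, entry_zero, word_insertMax_of_le p k b hk]
  | succ j => exact p.word_insertMax_of_le k b hj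

lemma abs_entry_insertMax_left_le : |(p.insertMax k b).entry k| ≤ m := by
  rcases Nat.eq_zero_or_pos (k : ℕ) with hk | hk
  · have h2 : (p.insertMax k b).word 2 = p.word 1 := p.entry_insertMax_succ k b (j := 1) (by omega)
    rw [hk, entry_zero, h2, abs_neg]
    exact p.abs_word_le 1
  · obtain ⟨i, hi⟩ := Nat.exists_eq_add_one_of_ne_zero hk.ne'
    have hword := p.word_insertMax_of_le k b le_rfl
    rw [hi] at hword ⊢
    rw [entry_succ, hword]
    exact p.abs_word_le (i + 1)

lemma self_mem_ddes_insertMax : (k : ℕ) ∈ (p.insertMax k b).ddes ↔ b = true := by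
  have hbound := abs_le.mp (p.abs_entry_insertMax_left_le k b)
  rw [mem_ddes, entry_insertMax_self]
  cases b <;> simp <;> omega

lemma succ_self_mem_ddes_insertMax (hk : (k : ℕ) < m) :
    (k : ℕ) + 1 ∈ (p.insertMax k b).ddes ↔ b = false := by
  have hbound := abs_le.mp (p.abs_entry_le (k + 1))
  rw [mem_ddes, entry_insertMax_succ _ _ _ (Nat.lt_succ_self _), entry_insertMax_self]
  cases b <;> simp <;> omega

lemma mem_ddes_insertMax_of_lt (hk : 2 ≤ (k : ℕ)) {i : ℕ} (hi : i < k) :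
    i ∈ (p.insertMax k b).ddes ↔ i ∈ p.ddes := by
  rw [mem_ddes, mem_ddes, entry_insertMax_of_le p k b hk hi, entry_insertMax_of_le p k b hk hi.le]
  exact and_congr_left fun _ => by omega

lemma succ_mem_ddes_insertMax_of_gt {i : ℕ} (hi : k < i) :
    i + 1 ∈ (p.insertMax k b).ddes ↔ i ∈ p.ddes := by
  rw [mem_ddes, mem_ddes, entry_insertMax_succ _ _ _ hi, entry_insertMax_succ _ _ _ (by omega)]
  omega

lemma zero_mem_ddes_insertMax_of_eq_one (hk : (k : ℕ) = 1) :
    0 ∈ (p.insertMax k b).ddes ↔ b = true := by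
  have hbound := abs_le.mp (p.abs_word_le 1)
  have hself : (p.insertMax k b).word 2 = (if b then -1 else 1) * ((m : ℤ) + 1) := by
    simpa [hk, entry_succ] using p.entry_insertMax_self k b
  rw [mem_ddes, entry_succ, entry_zero, hself, word_insertMax_of_le p k b (by omega)]
  cases b <;> simp <;> omega

lemma type1_insertMax_of_eq_zero (hm : 0 < m) (hk : (k : ℕ) = 0) :
    (p.insertMax k b).type1 ↔ b = false := by
  have h0 := p.self_mem_ddes_insertMax k b
  have h1 := p.succ_self_mem_ddes_insertMax k b (by omega)
  rw [hk] at h0 h1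
  simp [type1, h0, h1]

lemma not_type1_insertMax_of_eq_one (hk : (k : ℕ) = 1) : ¬(p.insertMax k b).type1 := by
  have h1 := p.self_mem_ddes_insertMax k b
  rw [hk] at h1
  simp [type1, h1, p.zero_mem_ddes_insertMax_of_eq_one k b hk]

lemma type1_insertMax_of_two_le (hk : 2 ≤ (k : ℕ)) : (p.insertMax k b).type1 ↔ p.type1 := by
  rw [type1, type1, mem_ddes_insertMax_of_lt p k b hk hk,
    mem_ddes_insertMax_of_lt p k b hk (by omega)]

lemma d_insertMax_of_lt (hk : (k : ℕ) < m) (hk1 : (k : ℕ) ≠ 1) :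
    (p.insertMax k b).d = if (k : ℕ) ∈ p.ddes then p.d else p.d + 1 := by
  have hgap := sum_range_succ_add_of_gap (f := fun i => if i ∈ p.ddes then 1 else 0)
    (g := fun i => if i ∈ (p.insertMax k b).ddes then 1 else 0) hk
    (fun i hi => by simp only [p.mem_ddes_insertMax_of_lt k b (by omega) hi])
    (fun i hi => by simp only [p.succ_mem_ddes_insertMax_of_gt k b hi])
  simp only [← d_eq_sum, self_mem_ddes_insertMax, succ_self_mem_ddes_insertMax p k b hk] at hgap
  cases b <;> grind

lemma d_insertMax_last (hm : 2 ≤ m) : (p.insertMax (Fin.last m) b).d = p.d + b.toNat := by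
  have hlow : ∑ i ∈ Finset.range m, (if i ∈ (p.insertMax (Fin.last m) b).ddes then 1 else 0) =
      p.d := by
    rw [d_eq_sum p]
    refine Finset.sum_congr rfl fun i hi => ?_
    simp only [p.mem_ddes_insertMax_of_lt (Fin.last m) b hm (Finset.mem_range.mp hi)]
  have hlast : m ∈ (p.insertMax (Fin.last m) b).ddes ↔ b = true :=
    p.self_mem_ddes_insertMax (Fin.last m) b
  rw [d_eq_sum, Finset.sum_range_succ, hlow]
  cases b <;> simp [hlast]

end InsertMax

section SumInsertMax

variable {R : Type*}

lemma sum_weight_type1_insertMax_zero [Semiring R] (x : R) (p : SignedPerm m) (hm : 0 < m) :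
    ∑ b, weight x type1 (p.insertMax 0 b) =
      if 0 ∈ p.ddes then x ^ p.d else x ^ (p.d + 1) := by
  have htype (b : Bool) := p.type1_insertMax_of_eq_zero 0 b hm rfl
  have hd := p.d_insertMax_of_lt 0 false hm zero_ne_one
  rw [Fintype.sum_bool, weight, weight, if_neg (by simp [htype]), if_pos (by simp [htype]),
    zero_add, hd, Fin.val_zero, apply_ite (x ^ ·)]

lemma sum_weight_type1_insertMax_of_eq_one [Semiring R] (x : R) (p : SignedPerm m)
    (k : Fin (m + 1)) (hk : (k : ℕ) = 1) : ∑ b, weight x type1 (p.insertMax k b) = 0 := by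
  simp [weight, p.not_type1_insertMax_of_eq_one k _ hk]

lemma sum_weight_type1_insertMax_of_two_le [Semiring R] (x : R) (p : SignedPerm m)
    (k : Fin (m + 1)) (hk : 2 ≤ (k : ℕ)) (hkm : (k : ℕ) < m) :
    ∑ b, weight x type1 (p.insertMax k b) =
      2 * (weight x type1 p * if (k : ℕ) ∈ p.ddes then 1 else x) := by
  simp only [Fintype.sum_bool, weight, p.type1_insertMax_of_two_le k _ hk,
    p.d_insertMax_of_lt k _ hkm (by omega), ← two_mul]
  split_ifs <;> simp [pow_succ]

lemma sum_weight_type1_insertMax_last [Semiring R] (x : R) (p : SignedPerm m) (hm : 2 ≤ m) :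
    ∑ b, weight x type1 (p.insertMax (Fin.last m) b) = weight x type1 p * (x + 1) := by
  simp only [Fintype.sum_bool, weight, p.type1_insertMax_of_two_le (Fin.last m) _ hm,
    p.d_insertMax_last _ hm]
  split_ifs <;> simp [pow_succ, mul_add]

lemma d_eq_of_type1 {r : ℕ} {p : SignedPerm (r + 2)} (hp : p.type1) :
    p.d = ∑ k : Fin r, (if (k : ℕ) + 2 ∈ p.ddes then 1 else 0) + 1 := by
  rw [Fin.sum_univ_eq_sum_range (fun k => if k + 2 ∈ p.ddes then 1 else 0), d_eq_sum,
    Finset.sum_range_succ', Finset.sum_range_succ']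
  simp [hp.1, hp.2]

lemma sum_ite_mem_ddes_of_type1 [CommRing R] (x : R) {r : ℕ} {p : SignedPerm (r + 2)}
    (hp : p.type1) :
    ∑ k : Fin r, (if (k : ℕ) + 2 ∈ p.ddes then 1 else x) = r * x + (p.d - 1) * (1 - x) := by
  have hd : ((p.d : ℕ) : R) - 1 = ∑ k : Fin r, (if (k : ℕ) + 2 ∈ p.ddes then 1 else 0) := by
    rw [d_eq_of_type1 hp]
    push_cast
    ring
  calc ∑ k : Fin r, (if (k : ℕ) + 2 ∈ p.ddes then 1 else x)
      = ∑ k : Fin r, (x + (if (k : ℕ) + 2 ∈ p.ddes then 1 else 0) * (1 - x)) :=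
        Finset.sum_congr rfl fun k _ => by split_ifs <;> ring
    _ = r * x + (p.d - 1) * (1 - x) := by
        rw [Finset.sum_add_distrib, ← Finset.sum_mul, ← hd]
        simp

lemma sum_weight_type1_insertMax [CommRing R] (x : R) (hm : 2 ≤ m) (p : SignedPerm m) :
    ∑ k, ∑ b, weight x type1 (p.insertMax k b) =
      (2 * m * x - 1 - x) * weight x type1 p + 2 * (1 - x) * (p.d * weight x type1 p) +
        if 0 ∈ p.ddes then x ^ p.d else x ^ (p.d + 1) := by
  obtain ⟨r, rfl⟩ := Nat.exists_eq_add_of_le' hm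
  have hinner (k : Fin r) := sum_weight_type1_insertMax_of_two_le x p k.castSucc.succ.succ
    (by simp) (by simp)
  rw [Fin.sum_univ_succ, Fin.sum_univ_succ, Fin.sum_univ_castSucc,
    sum_weight_type1_insertMax_zero x p (by omega),
    sum_weight_type1_insertMax_of_eq_one x p _ rfl,
    Fin.succ_last, Fin.succ_last, sum_weight_type1_insertMax_last x p hm]
  simp only [hinner, Fin.val_succ, Fin.val_castSucc, ← Finset.mul_sum]
  by_cases hp : p.type1
  · rw [sum_ite_mem_ddes_of_type1 x hp]
    push_cast
    ring
  · simp [weight, hp]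

lemma ite_zero_mem_ddes_eq_weight [Semiring R] (x : R) (p : SignedPerm n) :
    (if 0 ∈ p.ddes then x ^ p.d else x ^ (p.d + 1)) =
      x * weight x type1 p + weight x type01 p + x * weight x typeGe2 p +
        weight x type0Ge2 p := by
  by_cases h0 : 0 ∈ p.ddes <;> by_cases h1 : 1 ∈ p.ddes <;>
    simp [weight, type1, type01, typeGe2, type0Ge2, h0, h1, pow_succ']

open Polynomial in
lemma X_mul_derivative_weight_X [CommSemiring R] (P : SignedPerm n → Prop) [DecidablePred P]
    (p : SignedPerm n) :
    X * derivative (weight (X : R[X]) P p) = (p.d : R[X]) * weight X P p := by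
  unfold weight
  split_ifs
  · rcases Nat.eq_zero_or_pos p.d with hd | hd
    · simp [hd]
    · rw [derivative_X_pow, map_natCast, mul_left_comm, mul_pow_sub_one hd.ne']
  · simp

open Polynomial in
lemma sum_weight_X_type1_insertMax [CommRing R] (hm : 2 ≤ m) (p : SignedPerm m) :
    ∑ k, ∑ b, weight (X : R[X]) type1 (p.insertMax k b) =
      (2 * (m : R[X]) * X - 1) * weight X type1 p +
        2 * X * (1 - X) * derivative (weight X type1 p) +
        weight X type01 p + X * weight X typeGe2 p + weight X type0Ge2 p := by
  rw [sum_weight_type1_insertMax X hm p, ite_zero_mem_ddes_eq_weight X p,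
    ← X_mul_derivative_weight_X]
  ring

end SumInsertMax

section SubEulerian

open Polynomial

lemma two_mul_polyD1 (hn : 2 ≤ n) : 2 * polyD1 n = ∑ p : SignedPerm n, weight X type1 p :=
  two_mul_sum_inD_and hn X type1 fun p q h => by rw [type1, type1, h]

lemma two_mul_polyD01 (hn : 2 ≤ n) : 2 * polyD01 n = ∑ p : SignedPerm n, weight X type01 p :=
  two_mul_sum_inD_and hn X type01 fun p q h => by rw [type01, type01, h]

lemma two_mul_polyDGe2 (hn : 2 ≤ n) : 2 * polyDGe2 n = ∑ p : SignedPerm n, weight X typeGe2 p :=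
  two_mul_sum_inD_and hn X typeGe2 fun p q h => by rw [typeGe2, typeGe2, h]

lemma two_mul_polyD0Ge2 (hn : 2 ≤ n) :
    2 * polyD0Ge2 n = ∑ p : SignedPerm n, weight X type0Ge2 p :=
  two_mul_sum_inD_and hn X type0Ge2 fun p q h => by rw [type0Ge2, type0Ge2, h]

lemma two_mul_derivative_polyD1 (hn : 2 ≤ n) :
    2 * derivative (polyD1 n) = ∑ p : SignedPerm n, derivative (weight X type1 p) := by
  rw [← derivative_sum, ← two_mul_polyD1 hn, ← Nat.cast_two, derivative_natCast_mul]

end SubEulerian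

end SignedPerm

open Polynomial in
/-- **Proposition 3.3 (i).** Difference-differential equation for `D_n^1(t)`. -/
theorem polyD1_recurrence (n : ℕ) (hn : 3 ≤ n) :
    polyD1 n = (C (2 * ((n : ℚ) - 1)) * X - 1) * polyD1 (n - 1)
      + 2 * X * (1 - X) * derivative (polyD1 (n - 1))
      + polyD01 (n - 1) + X * polyDGe2 (n - 1) + polyD0Ge2 (n - 1) := by
  obtain ⟨m, rfl⟩ := Nat.exists_eq_add_one_of_ne_zero (by omega : n ≠ 0)
  have hm : 2 ≤ m := Nat.le_of_succ_le_succ hn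
  have hcoeff : C (2 * (((m + 1 : ℕ) : ℚ) - 1)) = 2 * (m : ℚ[X]) := by simp [C_ofNat]
  rw [Nat.add_sub_cancel, hcoeff]
  apply mul_left_cancel₀ (two_ne_zero (α := ℚ[X]))
  calc 2 * polyD1 (m + 1)
      = ∑ p : SignedPerm m, ∑ k, ∑ b, (p.insertMax k b).weight X SignedPerm.type1 := by
        rw [SignedPerm.two_mul_polyD1 (by omega), SignedPerm.sum_insertMax]
    _ = (2 * (m : ℚ[X]) * X - 1) * (2 * polyD1 m) + 2 * X * (1 - X) * (2 * derivative (polyD1 m))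
          + 2 * polyD01 m + X * (2 * polyDGe2 m) + 2 * polyD0Ge2 m := by
        simp only [SignedPerm.sum_weight_X_type1_insertMax hm, Finset.sum_add_distrib,
          ← Finset.mul_sum, SignedPerm.two_mul_polyD1 hm, SignedPerm.two_mul_derivative_polyD1 hm,
          SignedPerm.two_mul_polyD01 hm, SignedPerm.two_mul_polyDGe2 hm,
          SignedPerm.two_mul_polyD0Ge2 hm]
    _ = _ := by ring
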